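/- Let SO(3) act by conjugation, g·A = gAgᵀ, on V = {A ∈ M₃(ℂ) : Aᵀ = A, tr A = 0}, the 5-dimensional complex space of traceless complex symmetric 3×3 matrices, with moment map J : V → so(3)*, J(A)(ξ) = Im tr((ξA − Aξ)\overline{A}) for ξ ∈ so(3), and set M = J⁻¹(0), M₀ = M/SO(3). Let S₃ act on the plane P = {z ∈ ℂ³ : z₁ + z₂ + z₃ = 0} by permuting coordinates, with orbit space Y = P/S₃. Then there exists a ℤ-graded regular diffeomorphism from M₀ to Y. -/

import Mathlib

/-!
Statement 11: The symplectic quotient of the SO(3)-module `V` of traceless complex symmetric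
3×3 matrices (≅ the SU(2)-module R₄) is ℤ-graded regularly diffeomorphic to the linear
orbifold `P/S₃`, where `P = {z ∈ ℂ³ : z₁+z₂+z₃ = 0}` with `S₃` permuting the coordinates.
-/

namespace Stmt11

noncomputable section

open MvPolynomial Complex

/-- Evaluation of a real polynomial in the real coordinates (indexed by `ι × Bool`) at a
point of `ι → ℂ`. -/
def evalR {ι : Type} (p : MvPolynomial (ι × Bool) ℝ) (z : ι → ℂ) : ℝ :=
  MvPolynomial.eval (fun q => if q.2 then (z q.1).im else (z q.1).re) p

/-- The special orthogonal group SO(3) as a set of real matrices. -/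
def SO3 : Set (Matrix (Fin 3) (Fin 3) ℝ) :=
  {g | g * g.transpose = 1 ∧ g.det = 1}

/-- The SO(3)-module `V` of traceless symmetric complex 3×3 matrices. -/
def Vset : Set (Matrix (Fin 3) (Fin 3) ℂ) :=
  {A | A.transpose = A ∧ A.trace = 0}

/-- The action `g·A = gAgᵀ` on complex matrices (`g` a real matrix). -/
def act (g : Matrix (Fin 3) (Fin 3) ℝ) (A : Matrix (Fin 3) (Fin 3) ℂ) :
    Matrix (Fin 3) (Fin 3) ℂ :=
  g.map Complex.ofReal * A * (g.map Complex.ofReal).transpose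

/-- The zero set `M = J⁻¹(0) ⊆ V` of the moment map
`J(A)(ξ) = Im tr((ξA − Aξ)·conj(A))`, `ξ` ranging over `so(3)` (real skew-symmetric). -/
def Mset : Set (Matrix (Fin 3) (Fin 3) ℂ) :=
  {A | A ∈ Vset ∧ ∀ ξ : Matrix (Fin 3) (Fin 3) ℝ, ξ.transpose = -ξ →
    (((ξ.map Complex.ofReal * A - A * ξ.map Complex.ofReal) *
      A.map (starRingEnd ℂ)).trace).im = 0}

/-- Orbit equivalence on `M` for the SO(3)-action. -/
def relM (A B : Mset) : Prop :=
  ∃ g ∈ SO3, (B : Matrix (Fin 3) (Fin 3) ℂ) = act g (A : Matrix (Fin 3) (Fin 3) ℂ)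

/-- The symplectic quotient `M₀ = M/SO(3)` with the quotient topology. -/
def M₀ : Type := Quot relM

instance : TopologicalSpace M₀ := instTopologicalSpaceQuot

/-- The degree-`d` regular functions on `M₀`. -/
def RegM (d : ℕ) : Set (M₀ → ℝ) :=
  {f | ∃ p : MvPolynomial ((Fin 3 × Fin 3) × Bool) ℝ, p.IsHomogeneous d ∧
    (∀ g ∈ SO3, ∀ A ∈ Vset,
      evalR p (fun q => act g A q.1 q.2) = evalR p (fun q => A q.1 q.2)) ∧
    ∀ x : Mset, f (Quot.mk _ x) = evalR p (fun q => (x : Matrix (Fin 3) (Fin 3) ℂ) q.1 q.2)}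

/-- The plane `P = {z ∈ ℂ³ : z₁ + z₂ + z₃ = 0}`. -/
def P : Set (Fin 3 → ℂ) := {z | z 0 + z 1 + z 2 = 0}

/-- Orbit equivalence on `P` for the coordinate-permutation action of `S₃`. -/
def relP (z w : P) : Prop :=
  ∃ σ : Equiv.Perm (Fin 3), ∀ i, (w : Fin 3 → ℂ) i = (z : Fin 3 → ℂ) (σ i)

/-- The linear symplectic orbifold `Y = P/S₃` with the quotient topology. -/
def Y : Type := Quot relP

instance : TopologicalSpace Y := instTopologicalSpaceQuot

/-- The degree-`d` regular functions on `Y = P/S₃`. -/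
def RegY (d : ℕ) : Set (Y → ℝ) :=
  {f | ∃ p : MvPolynomial (Fin 3 × Bool) ℝ, p.IsHomogeneous d ∧
    (∀ σ : Equiv.Perm (Fin 3), ∀ z ∈ P, evalR p (fun i => z (σ i)) = evalR p z) ∧
    ∀ z : P, f (Quot.mk _ z) = evalR p (z : Fin 3 → ℂ)}

/-!
The moment map of a traceless symmetric matrix `A` vanishes if and only if `Re A` and `Im A`
commute, that is, if and only if `A` is SO(3)-conjugate to a diagonal matrix. The diagonal entries
are the eigenvalues of `A`, hence unique up to permutation, so `P → M`, `z ↦ diag z`, induces a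
continuous bijection `P/S₃ → M/SO(3)`; it is closed because SO(3) is compact.

Invariant polynomials on `V` restrict to invariant polynomials on the diagonal matrices. Conversely,
the sum of the permutations of the monomial `∏ₖ (Re zₖ)^aₖ (Im zₖ)^bₖ` is the value at `A = diag z`
of the polarized determinant of the matrices `(Re A)^aₖ (Im A)^bₖ`, which is a
conjugation-invariant polynomial of the same degree in `A`. So the average over `S₃` of any
polynomial extends to an invariant of matrices, and averaging does not affect a polynomial that is
already invariant on `P`.
-/

open scoped Matrix

section SimultaneousDiagonalization

open Function Module.End

variable {ι 𝕜 n : Type*} [RCLike 𝕜] [Fintype n]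

theorem exists_orthonormalBasis_forall_apply_eq_smul {E : Type*} [Finite ι]
    [NormedAddCommGroup E] [InnerProductSpace 𝕜 E] [FiniteDimensional 𝕜 E]
    {T : ι → E →ₗ[𝕜] E} (hT : ∀ i, (T i).IsSymmetric) (hcomm : Pairwise (Commute on T))
    (hn : Module.finrank 𝕜 E = Fintype.card n) :
    ∃ (b : OrthonormalBasis n 𝕜 E) (μ : ι → n → 𝕜), ∀ i j, T i (b j) = μ i j • b j := by
  classical
  have := Fintype.ofFinite ι
  have hV := LinearMap.IsSymmetric.orthogonalFamily_iInf_eigenspaces hT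
  have hinternal := LinearMap.IsSymmetric.directSum_isInternal_of_pairwise_commute hT hcomm
  let := hV.independent.fintypeNeBotOfFiniteDimensional
  have hinternal' := DirectSum.isInternal_ne_bot_iff.mpr hinternal
  have hV' := hV.comp Subtype.val_injective (γ := {μ : ι → 𝕜 // ⨅ i, eigenspace (T i) (μ i) ≠ ⊥})
  refine ⟨(hinternal'.subordinateOrthonormalBasis hn hV').reindex (Fintype.equivFin n).symm,
    fun i j => (hinternal'.subordinateOrthonormalBasisIndex hn (Fintype.equivFin n j) hV').1 i,
    fun i j => ?_⟩
  have hj := hinternal'.subordinateOrthonormalBasis_subordinate hn (Fintype.equivFin n j) hV'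
  simpa using mem_eigenspace_iff.mp (Submodule.mem_iInf _ |>.mp hj i)

theorem exists_unitary_forall_conj_eq_diagonal [DecidableEq n] [Finite ι] {T : ι → Matrix n n 𝕜}
    (hT : ∀ i, (T i).IsHermitian) (hcomm : Pairwise (Commute on T)) :
    ∃ U ∈ Matrix.unitaryGroup n 𝕜, ∃ μ : ι → n → 𝕜,
      ∀ i, star U * T i * U = Matrix.diagonal (μ i) := by
  obtain ⟨b, μ, hb⟩ := exists_orthonormalBasis_forall_apply_eq_smul
    (T := fun i => Matrix.toEuclideanLin (T i))
    (fun i => Matrix.isSymmetric_toEuclideanLin_iff.mpr (hT i))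
    (fun i j hij => (hcomm hij).map (Matrix.toLinAlgEquiv (PiLp.basisFun 2 𝕜 n)))
    finrank_euclideanSpace
  let U := (EuclideanSpace.basisFun n 𝕜).toBasis.toMatrix b.toBasis
  have hU : U ∈ Matrix.unitaryGroup n 𝕜 :=
    (EuclideanSpace.basisFun n 𝕜).toMatrix_orthonormalBasis_mem_unitary b
  have hTU (i : ι) : T i * U = U * Matrix.diagonal (μ i) := by
    ext k j
    have hkj := congrArg (fun v : EuclideanSpace 𝕜 n => v k) (hb i j)
    rw [Matrix.mul_diagonal, mul_comm]
    exact hkj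
  refine ⟨U, hU, μ, fun i => ?_⟩
  rw [mul_assoc, hTU, ← mul_assoc, Matrix.mem_unitaryGroup_iff'.mp hU, one_mul]

theorem exists_orthogonal_conj_eq_diagonal [DecidableEq n] {X Y : Matrix n n ℝ}
    (hX : X.IsSymm) (hY : Y.IsSymm) (hXY : Commute X Y) :
    ∃ (g : Matrix n n ℝ) (x y : n → ℝ), g * gᵀ = 1 ∧
      g * X * gᵀ = Matrix.diagonal x ∧ g * Y * gᵀ = Matrix.diagonal y := by
  obtain ⟨U, hU, μ, hμ⟩ := exists_unitary_forall_conj_eq_diagonal (T := ![X, Y])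
    (by simpa [Fin.forall_fin_two, Matrix.IsHermitian] using ⟨hX, hY⟩)
    (by simpa [Pairwise, Fin.forall_fin_two, onFun] using ⟨hXY, hXY.symm⟩)
  have hU' := Matrix.mem_unitaryGroup_iff'.mp hU
  simp only [Matrix.star_eq_conjTranspose, Matrix.conjTranspose_eq_transpose_of_trivial] at hμ hU'
  exact ⟨Uᵀ, μ 0, μ 1, hU', hμ 0, hμ 1⟩

end SimultaneousDiagonalization

section DiagonalMatrices

variable {n R : Type*} [Fintype n] [CommRing R]

theorem exists_perm_of_map_univ_eq {α : Type*} {z w : n → α}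
    (h : Finset.univ.val.map z = Finset.univ.val.map w) :
    ∃ σ : Equiv.Perm n, ∀ i, w i = z (σ i) := by
  classical
  have hcard (c : α) : Fintype.card {i // w i = c} = Fintype.card {i // z i = c} := by
    simpa [Multiset.count_map, Fintype.card_subtype, Finset.card, eq_comm]
      using congrArg (Multiset.count c) h.symm
  exact ⟨Equiv.ofFiberEquiv fun c => Fintype.equivOfCardEq (hcard c),
    fun i => (Equiv.ofFiberEquiv_map _ i).symm⟩

variable [DecidableEq n]

theorem exists_perm_of_conj_diagonal_eq_diagonal [IsDomain R] {U V : Matrix n n R}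
    (hUV : U * V = 1) {z w : n → R} (h : U * Matrix.diagonal z * V = Matrix.diagonal w) :
    ∃ σ : Equiv.Perm n, ∀ i, w i = z (σ i) := by
  have hroots (v : n → R) : (Matrix.diagonal v).charpoly.roots = Finset.univ.val.map v := by
    have hprod : ∏ i, (Polynomial.X - Polynomial.C (v i)) =
        ((Finset.univ.val.map v).map fun c => Polynomial.X - Polynomial.C c).prod := by
      rw [Multiset.map_map]
      rfl
    rw [Matrix.charpoly_diagonal, hprod, Polynomial.roots_multiset_prod_X_sub_C]
  refine exists_perm_of_map_univ_eq ?_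
  rw [← hroots, ← hroots, ← h, Matrix.charpoly_mul_comm, ← mul_assoc, mul_eq_one_comm.mp hUV,
    one_mul]

theorem permMatrix_mul_diagonal_mul_transpose (σ : Equiv.Perm n) (z : n → R) :
    σ.permMatrix R * Matrix.diagonal z * (σ.permMatrix R)ᵀ = Matrix.diagonal (z ∘ σ) := by
  rw [Matrix.transpose_permMatrix, PEquiv.toMatrix_toPEquiv_mul, PEquiv.mul_toMatrix_toPEquiv,
    Matrix.submatrix_submatrix]
  exact Matrix.submatrix_diagonal_equiv z σ

theorem permMatrix_mul_transpose (σ : Equiv.Perm n) :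
    σ.permMatrix R * (σ.permMatrix R)ᵀ = 1 := by
  simpa [Function.comp_def] using permMatrix_mul_diagonal_mul_transpose (R := R) σ 1

end DiagonalMatrices

section MixedDiscriminant

variable {n R S : Type*} [Fintype n] [DecidableEq n] [CommRing R] [CommRing S]

/-- The full polarization of the determinant, evaluated at a family of matrices indexed by their
rows. It is `(card n)!` times the mixed discriminant, a normalization that makes sense over any
commutative ring. -/
def mixedDiscr (G : n → Matrix n n R) : R :=
  ∑ σ : Equiv.Perm n, (Matrix.of fun i => G (σ i) i).det

theorem mixedDiscr_diagonal (w : n → n → R) :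
    mixedDiscr (fun k => Matrix.diagonal (w k)) = ∑ σ : Equiv.Perm n, ∏ i, w i (σ i) := by
  rw [mixedDiscr, ← Equiv.sum_comp (Equiv.inv (Equiv.Perm n))]
  refine Finset.sum_congr rfl fun σ _ => ?_
  have hdiag : (Matrix.of fun i => Matrix.diagonal (w (σ⁻¹ i)) i) =
      Matrix.diagonal fun i => w (σ⁻¹ i) i := by
    ext i j
    simp [Matrix.diagonal_apply]
  rw [Equiv.inv_apply, hdiag, Matrix.det_diagonal, ← Equiv.prod_comp σ]
  simp

theorem mixedDiscr_mul_right (G : n → Matrix n n R) (B : Matrix n n R) :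
    mixedDiscr (fun k => G k * B) = mixedDiscr G * B.det := by
  simp only [mixedDiscr, Finset.sum_mul, ← Matrix.det_mul]
  rfl

theorem mixedDiscr_transpose (G : n → Matrix n n R) :
    mixedDiscr (fun k => (G k)ᵀ) = mixedDiscr G := by
  have hcolumns (σ : Equiv.Perm n) : (Matrix.of fun i => (G (σ i))ᵀ i).det =
      ∑ τ : Equiv.Perm n, τ.sign • ∏ i, G (σ i) (τ i) i := by
    rw [← Matrix.det_transpose, Matrix.det_apply]
    rfl
  have hrows (σ : Equiv.Perm n) : (Matrix.of fun i => G (σ i) i).det =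
      ∑ τ : Equiv.Perm n, τ.sign • ∏ i, G (σ (τ i)) (τ i) i := Matrix.det_apply _
  simp only [mixedDiscr, hcolumns, hrows]
  rw [Finset.sum_comm, Finset.sum_comm (f := fun σ τ : Equiv.Perm n =>
    τ.sign • ∏ i, G (σ (τ i)) (τ i) i)]
  exact Finset.sum_congr rfl fun τ _ => (Equiv.sum_comp (Equiv.mulRight τ)
    fun σ : Equiv.Perm n => τ.sign • ∏ i, G (σ i) (τ i) i).symm

theorem mixedDiscr_mul_left (A : Matrix n n R) (G : n → Matrix n n R) :
    mixedDiscr (fun k => A * G k) = A.det * mixedDiscr G := by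
  rw [← mixedDiscr_transpose]
  simp only [Matrix.transpose_mul]
  rw [mixedDiscr_mul_right, mixedDiscr_transpose, Matrix.det_transpose, mul_comm]

theorem mixedDiscr_conj {A B : Matrix n n R} (hAB : A * B = 1) (G : n → Matrix n n R) :
    mixedDiscr (fun k => A * G k * B) = mixedDiscr G := by
  rw [mixedDiscr_mul_right, mixedDiscr_mul_left, mul_right_comm, ← Matrix.det_mul, hAB,
    Matrix.det_one, one_mul]

theorem map_mixedDiscr (f : R →+* S) (G : n → Matrix n n R) :
    f (mixedDiscr G) = mixedDiscr fun k => (G k).map f := by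
  simp only [mixedDiscr, map_sum, RingHom.map_det]
  rfl

end MixedDiscriminant

section HomogeneousMatrices

variable {n σ R S : Type*} [Fintype n] [CommSemiring R] [CommRing S]

theorem isHomogeneous_matrix_mul {M N : Matrix n n (MvPolynomial σ R)} {a b : ℕ}
    (hM : ∀ i j, (M i j).IsHomogeneous a) (hN : ∀ i j, (N i j).IsHomogeneous b) (i j : n) :
    ((M * N) i j).IsHomogeneous (a + b) :=
  IsHomogeneous.sum _ _ _ fun k _ => (hM i k).mul (hN k j)

variable [DecidableEq n]

theorem isHomogeneous_matrix_pow {M : Matrix n n (MvPolynomial σ R)}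
    (hM : ∀ i j, (M i j).IsHomogeneous 1) (a : ℕ) :
    ∀ i j, ((M ^ a) i j).IsHomogeneous a := by
  induction a with
  | zero =>
    intro i j
    rw [pow_zero, Matrix.one_apply]
    split_ifs
    exacts [isHomogeneous_one _ _, isHomogeneous_zero _ _ _]
  | succ a ih => exact pow_succ M a ▸ isHomogeneous_matrix_mul ih hM

theorem isHomogeneous_det {M : Matrix n n (MvPolynomial σ S)} {d : n → ℕ}
    (hM : ∀ i j, (M i j).IsHomogeneous (d i)) :
    M.det.IsHomogeneous (∑ i, d i) := by
  rw [Matrix.det_apply]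
  refine IsHomogeneous.sum _ _ _ fun τ _ => ?_
  have hprod : (∏ i, M (τ i) i).IsHomogeneous (∑ i, d i) :=
    Equiv.sum_comp τ d ▸ IsHomogeneous.prod _ _ _ fun i _ => hM (τ i) i
  rcases Int.units_eq_one_or τ.sign with h | h
  · simpa [h] using hprod
  · simpa [h] using hprod.neg

theorem isHomogeneous_mixedDiscr {G : n → Matrix n n (MvPolynomial σ S)} {d : n → ℕ}
    (hG : ∀ k i j, (G k i j).IsHomogeneous (d k)) :
    (mixedDiscr G).IsHomogeneous (∑ k, d k) :=
  IsHomogeneous.sum _ _ _ fun τ _ =>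
    Equiv.sum_comp τ d ▸ isHomogeneous_det fun i j => hG (τ i) i j

end HomogeneousMatrices

section ComplexMatrices

variable {n : Type*}

theorem map_re_map_ofReal (X : Matrix n n ℝ) : (X.map ofReal).map re = X := by
  ext; simp

theorem map_im_map_ofReal (X : Matrix n n ℝ) : (X.map ofReal).map im = 0 := by
  ext; simp

theorem eq_diagonal_of_map_re_im [DecidableEq n] {A : Matrix n n ℂ} {x y : n → ℝ}
    (hre : A.map re = Matrix.diagonal x) (him : A.map im = Matrix.diagonal y) :
    A = Matrix.diagonal fun i => ⟨x i, y i⟩ := by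
  ext i j
  have hre := congrFun₂ hre i j
  have him := congrFun₂ him i j
  rw [Matrix.map_apply] at hre him
  refine Complex.ext (hre.trans ?_) (him.trans ?_) <;>
  · rw [Matrix.diagonal_apply, Matrix.diagonal_apply]
    split_ifs <;> rfl

variable [Fintype n]

theorem map_ofReal_mul (g h : Matrix n n ℝ) : (g * h).map ofReal = g.map ofReal * h.map ofReal :=
  Matrix.map_mul (f := ofRealHom)

theorem map_re_mul (A B : Matrix n n ℂ) :
    (A * B).map re = A.map re * B.map re - A.map im * B.map im := by
  ext i j
  simp [Matrix.mul_apply, Finset.sum_sub_distrib]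

theorem map_im_mul (A B : Matrix n n ℂ) :
    (A * B).map im = A.map re * B.map im + A.map im * B.map re := by
  ext i j
  simp [Matrix.mul_apply, Finset.sum_add_distrib]

theorem map_re_conj_ofReal (g : Matrix n n ℝ) (A : Matrix n n ℂ) :
    (g.map ofReal * A * (g.map ofReal)ᵀ).map re = g * A.map re * gᵀ := by
  simp only [← Matrix.transpose_map, map_re_mul, map_im_mul, map_re_map_ofReal,
    map_im_map_ofReal, zero_mul, mul_zero, sub_zero]

theorem map_im_conj_ofReal (g : Matrix n n ℝ) (A : Matrix n n ℂ) :
    (g.map ofReal * A * (g.map ofReal)ᵀ).map im = g * A.map im * gᵀ := by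
  simp only [← Matrix.transpose_map, map_re_mul, map_im_mul, map_re_map_ofReal,
    map_im_map_ofReal, zero_mul, mul_zero, add_zero, zero_add]

theorem map_ofReal_mul_transpose [DecidableEq n] {g : Matrix n n ℝ} (hg : g * gᵀ = 1) :
    g.map ofReal * (g.map ofReal)ᵀ = 1 := by
  rw [← Matrix.transpose_map, ← map_ofReal_mul, hg, Matrix.map_one _ ofReal_zero ofReal_one]

theorem im_trace_commutator_mul_conj (ξ : Matrix n n ℝ) (A : Matrix n n ℂ) :
    ((ξ.map ofReal * A - A * ξ.map ofReal) * A.map (starRingEnd ℂ)).trace.im =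
      2 * (ξ * (A.map im * A.map re - A.map re * A.map im)).trace := by
  have hcyclic : ((ξ.map ofReal * A - A * ξ.map ofReal) * A.map (starRingEnd ℂ)).trace =
      (ξ.map ofReal * (A * A.map (starRingEnd ℂ) - A.map (starRingEnd ℂ) * A)).trace := by
    rw [sub_mul, mul_sub, Matrix.trace_sub, Matrix.trace_sub, mul_assoc, mul_assoc,
      Matrix.trace_mul_comm A, mul_assoc]
  have him_trace (B : Matrix n n ℂ) : B.trace.im = (B.map im).trace := by simp [Matrix.trace]
  have hre_conj : (A.map (starRingEnd ℂ)).map re = A.map re := by ext; simp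
  have him_conj : (A.map (starRingEnd ℂ)).map im = -A.map im := by ext; simp
  have him_commutator : (A * A.map (starRingEnd ℂ) - A.map (starRingEnd ℂ) * A).map im =
      (2 : ℝ) • (A.map im * A.map re - A.map re * A.map im) := by
    rw [Matrix.map_sub _ sub_im, map_im_mul, map_im_mul, hre_conj, him_conj, two_smul]
    noncomm_ring
  rw [hcyclic, him_trace, map_im_mul, map_re_map_ofReal, map_im_map_ofReal, zero_mul, add_zero,
    him_commutator, mul_smul_comm, Matrix.trace_smul, smul_eq_mul]

end ComplexMatrices

section MomentMap

variable {A : Matrix (Fin 3) (Fin 3) ℂ}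

theorem mem_Mset_iff : A ∈ Mset ↔ A ∈ Vset ∧ Commute (A.map re) (A.map im) := by
  refine and_congr_right fun hA => ?_
  simp only [im_trace_commutator_mul_conj]
  refine ⟨fun hJ => ?_, fun hcomm ξ _ => ?_⟩
  · have hre : (A.map re)ᵀ = A.map re := Matrix.IsSymm.map hA.1 _
    have him : (A.map im)ᵀ = A.map im := Matrix.IsSymm.map hA.1 _
    set C := A.map im * A.map re - A.map re * A.map im with hC
    have hskew : Cᵀ = -C := by
      rw [hC, Matrix.transpose_sub, Matrix.transpose_mul, Matrix.transpose_mul, hre, him, neg_sub]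
    have htrace : (Cᴴ * C).trace = 0 := by
      have := hJ Cᵀ (by rw [hskew, Matrix.transpose_neg, hskew])
      simpa [Matrix.conjTranspose_eq_transpose_of_trivial] using this
    exact (sub_eq_zero.mp (Matrix.trace_conjTranspose_mul_self_eq_zero_iff.mp htrace)).symm
  · rw [hcomm.eq, sub_self, mul_zero, Matrix.trace_zero, mul_zero]

theorem diagonal_mem_Vset_iff {z : Fin 3 → ℂ} : Matrix.diagonal z ∈ Vset ↔ z ∈ P := by
  simp [Vset, P, Matrix.trace_diagonal, Fin.sum_univ_three]

theorem diagonal_mem_Mset {z : Fin 3 → ℂ} (hz : z ∈ P) : Matrix.diagonal z ∈ Mset := by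
  refine mem_Mset_iff.mpr ⟨diagonal_mem_Vset_iff.mpr hz, ?_⟩
  rw [Matrix.diagonal_map zero_re, Matrix.diagonal_map zero_im]
  exact Matrix.commute_diagonal _ _

end MomentMap

section Orbits

variable {g h : Matrix (Fin 3) (Fin 3) ℝ} {A : Matrix (Fin 3) (Fin 3) ℂ}

theorem act_one : act 1 A = A := by
  simp [act]

theorem act_mul : act (g * h) A = act g (act h A) := by
  simp only [act, map_ofReal_mul, Matrix.transpose_mul, mul_assoc]

theorem one_mem_SO3 : (1 : Matrix (Fin 3) (Fin 3) ℝ) ∈ SO3 := by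
  simp [SO3]

theorem mul_mem_SO3 (hg : g ∈ SO3) (hh : h ∈ SO3) : g * h ∈ SO3 := by
  refine ⟨?_, by rw [Matrix.det_mul, hg.2, hh.2, one_mul]⟩
  rw [Matrix.transpose_mul, mul_assoc, ← mul_assoc h, hh.1, one_mul, hg.1]

theorem transpose_mem_SO3 (hg : g ∈ SO3) : gᵀ ∈ SO3 :=
  ⟨mul_eq_one_comm.mp hg.1, (Matrix.det_transpose g).trans hg.2⟩

theorem act_transpose_act (hg : g ∈ SO3) : act gᵀ (act g A) = A := by
  rw [← act_mul, mul_eq_one_comm.mp hg.1, act_one]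

theorem relM_equivalence : Equivalence relM where
  refl _ := ⟨1, one_mem_SO3, act_one.symm⟩
  symm := by
    rintro A B ⟨g, hg, hB⟩
    exact ⟨gᵀ, transpose_mem_SO3 hg, by rw [hB, act_transpose_act hg]⟩
  trans := by
    rintro A B C ⟨g, hg, hB⟩ ⟨h, hh, hC⟩
    exact ⟨h * g, mul_mem_SO3 hh hg, by rw [hC, hB, act_mul]⟩

theorem exists_mem_SO3_act_eq (hg : g * gᵀ = 1) : ∃ h ∈ SO3, ∀ A, act h A = act g A := by
  have hdet : g.det * g.det = 1 := by
    simpa using congrArg Matrix.det hg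
  rcases mul_self_eq_one_iff.mp hdet with h | h
  · exact ⟨g, ⟨hg, h⟩, fun _ => rfl⟩
  · refine ⟨-g, ⟨by simpa using hg, by norm_num [Matrix.det_neg, h]⟩, fun A => ?_⟩
    simp [act, Matrix.map_neg]

theorem act_mem_Vset (hg : g * gᵀ = 1) (hA : A ∈ Vset) : act g A ∈ Vset := by
  refine ⟨?_, ?_⟩
  · rw [act, Matrix.transpose_mul, Matrix.transpose_mul, Matrix.transpose_transpose, hA.1,
      mul_assoc]
  · rw [act, Matrix.trace_mul_comm, ← mul_assoc, mul_eq_one_comm.mp (map_ofReal_mul_transpose hg),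
      one_mul, hA.2]

theorem exists_act_eq_diagonal (hA : A ∈ Mset) :
    ∃ g ∈ SO3, ∃ z ∈ P, act g A = Matrix.diagonal z := by
  obtain ⟨hV, hcomm⟩ := mem_Mset_iff.mp hA
  obtain ⟨g, x, y, hg, hx, hy⟩ := exists_orthogonal_conj_eq_diagonal
    (Matrix.IsSymm.map hV.1 _) (Matrix.IsSymm.map hV.1 _) hcomm
  have hdiag : act g A = Matrix.diagonal fun i => ⟨x i, y i⟩ :=
    eq_diagonal_of_map_re_im ((map_re_conj_ofReal g A).trans hx)
      ((map_im_conj_ofReal g A).trans hy)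
  obtain ⟨h, hh, hact⟩ := exists_mem_SO3_act_eq hg
  exact ⟨h, hh, _, diagonal_mem_Vset_iff.mp (hdiag ▸ act_mem_Vset hg hV), (hact A).trans hdiag⟩

theorem exists_act_diagonal_eq_diagonal_comp (σ : Equiv.Perm (Fin 3)) :
    ∃ g ∈ SO3, ∀ z, act g (Matrix.diagonal z) = Matrix.diagonal (z ∘ σ) := by
  obtain ⟨g, hg, hact⟩ := exists_mem_SO3_act_eq (permMatrix_mul_transpose (R := ℝ) σ)
  refine ⟨g, hg, fun z => ?_⟩
  have hmap : (σ.permMatrix ℝ).map ofReal = σ.permMatrix ℂ := PEquiv.map_toMatrix ofRealHom _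
  rw [hact, act, hmap, permMatrix_mul_diagonal_mul_transpose]

theorem exists_perm_of_act_diagonal_eq_diagonal (hg : g ∈ SO3) {z w : Fin 3 → ℂ}
    (h : act g (Matrix.diagonal z) = Matrix.diagonal w) :
    ∃ σ : Equiv.Perm (Fin 3), ∀ i, w i = z (σ i) :=
  exists_perm_of_conj_diagonal_eq_diagonal (map_ofReal_mul_transpose hg.1) h

end Orbits

section Lift

variable {n : Type} [DecidableEq n]

/-- The restriction of a polynomial on matrices to the diagonal matrices. -/
def diagRestrict (p : MvPolynomial ((n × n) × Bool) ℝ) : MvPolynomial (n × Bool) ℝ :=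
  aeval (fun q => Matrix.diagonal (fun i => X (i, q.2)) q.1.1 q.1.2) p

theorem isHomogeneous_diagRestrict {p : MvPolynomial ((n × n) × Bool) ℝ} {d : ℕ}
    (hp : p.IsHomogeneous d) : (diagRestrict p).IsHomogeneous d := by
  have := hp.aeval (fun q : (n × n) × Bool =>
      Matrix.diagonal (fun i => (X (i, q.2) : MvPolynomial (n × Bool) ℝ)) q.1.1 q.1.2)
    (n := 1) fun q => by
      rw [Matrix.diagonal_apply]
      split_ifs
      exacts [isHomogeneous_X _ _, isHomogeneous_zero _ _ _]
  rwa [one_mul] at this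

theorem evalR_diagRestrict (p : MvPolynomial ((n × n) × Bool) ℝ) (z : n → ℂ) :
    evalR (diagRestrict p) z = evalR p fun q => Matrix.diagonal z q.1 q.2 := by
  rw [evalR, diagRestrict, map_aeval, evalR, coe_eval₂Hom]
  have hring : (eval fun q : n × Bool => if q.2 then (z q.1).im else (z q.1).re).comp
      (algebraMap ℝ (MvPolynomial (n × Bool) ℝ)) = RingHom.id ℝ := by ext; simp
  rw [hring]
  change eval _ p = _
  congr 2 with ⟨⟨i, j⟩, c⟩
  by_cases hij : i = j <;> simp [hij]

variable [Fintype n]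

/-- The polynomial matrix `(Re A)^a * (Im A)^b` in the real coordinates of a complex
matrix `A`. -/
def rePowMulImPow (n : Type) [Fintype n] [DecidableEq n] (a b : ℕ) :
    Matrix n n (MvPolynomial ((n × n) × Bool) ℝ) :=
  Matrix.of (fun i j => X ((i, j), false)) ^ a * Matrix.of (fun i j => X ((i, j), true)) ^ b

theorem isHomogeneous_rePowMulImPow (a b : ℕ) (i j : n) :
    (rePowMulImPow n a b i j).IsHomogeneous (a + b) :=
  isHomogeneous_matrix_mul (isHomogeneous_matrix_pow (fun _ _ => isHomogeneous_X _ _) a)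
    (isHomogeneous_matrix_pow (fun _ _ => isHomogeneous_X _ _) b) i j

theorem map_evalR_rePowMulImPow (a b : ℕ) (A : Matrix n n ℂ) :
    (rePowMulImPow n a b).map (evalR · fun q => A q.1 q.2) = A.map re ^ a * A.map im ^ b := by
  let ev : MvPolynomial ((n × n) × Bool) ℝ →+* ℝ :=
    eval fun q => if q.2 then (A q.1.1 q.1.2).im else (A q.1.1 q.1.2).re
  change ev.mapMatrix (rePowMulImPow n a b) = _
  rw [rePowMulImPow, map_mul, map_pow, map_pow]
  congr 2 <;> ext i j <;> simp [ev]

/-- A conjugation-invariant polynomial on matrices which restricts on diagonal matrices to the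
sum of the permutations of the monomial with exponent `m`, see `evalR_monomialLift_diagonal`. -/
def monomialLift (m : n × Bool →₀ ℕ) : MvPolynomial ((n × n) × Bool) ℝ :=
  mixedDiscr fun k => rePowMulImPow n (m (k, false)) (m (k, true))

theorem isHomogeneous_monomialLift (m : n × Bool →₀ ℕ) :
    (monomialLift m).IsHomogeneous m.degree := by
  have hdegree : m.degree = ∑ k, (m (k, false) + m (k, true)) := by
    simp [Finsupp.degree_eq_sum, Fintype.sum_prod_type, add_comm]
  rw [hdegree]
  exact isHomogeneous_mixedDiscr fun k => isHomogeneous_rePowMulImPow _ _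

theorem evalR_monomialLift (m : n × Bool →₀ ℕ) (A : Matrix n n ℂ) :
    evalR (monomialLift m) (fun q => A q.1 q.2) =
      mixedDiscr fun k => A.map re ^ m (k, false) * A.map im ^ m (k, true) := by
  simp only [← map_evalR_rePowMulImPow]
  exact map_mixedDiscr (R := MvPolynomial ((n × n) × Bool) ℝ) (S := ℝ) (eval _) _

theorem evalR_monomialLift_conj (m : n × Bool →₀ ℕ) {g : Matrix n n ℝ} (hg : g * gᵀ = 1)
    (A : Matrix n n ℂ) :
    evalR (monomialLift m) (fun q => (g.map ofReal * A * (g.map ofReal)ᵀ) q.1 q.2) =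
      evalR (monomialLift m) fun q => A q.1 q.2 := by
  have hsemiconj (X : Matrix n n ℝ) : SemiconjBy g X (g * X * gᵀ) := by
    rw [SemiconjBy, mul_assoc _ gᵀ, mul_eq_one_comm.mp hg, mul_one]
  have hconj (a b : ℕ) : (g * A.map re * gᵀ) ^ a * (g * A.map im * gᵀ) ^ b =
      g * (A.map re ^ a * A.map im ^ b) * gᵀ := by
    rw [((hsemiconj _).pow_right a |>.mul_right <| (hsemiconj _).pow_right b).eq, mul_assoc _ g,
      hg, mul_one]
  simp only [evalR_monomialLift, map_re_conj_ofReal, map_im_conj_ofReal, hconj, mixedDiscr_conj hg]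

theorem evalR_monomialLift_diagonal (m : n × Bool →₀ ℕ) (z : n → ℂ) :
    evalR (monomialLift m) (fun q => Matrix.diagonal z q.1 q.2) =
      ∑ σ : Equiv.Perm n, evalR (monomial m 1) (z ∘ σ) := by
  simp only [evalR_monomialLift, Matrix.diagonal_map zero_re, Matrix.diagonal_map zero_im,
    Matrix.diagonal_pow, Matrix.diagonal_mul_diagonal, mixedDiscr_diagonal]
  refine Finset.sum_congr rfl fun σ _ => ?_
  simp [evalR, eval_monomial, Finsupp.prod_fintype, Fintype.prod_prod_type, mul_comm]

/-- A conjugation-invariant polynomial on matrices which restricts on diagonal matrices to the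
average of the permutations of `p`, see `evalR_symmLift_diagonal`. -/
def symmLift (p : MvPolynomial (n × Bool) ℝ) : MvPolynomial ((n × n) × Bool) ℝ :=
  C (Fintype.card (Equiv.Perm n) : ℝ)⁻¹ * ∑ m ∈ p.support, C (p.coeff m) * monomialLift m

theorem isHomogeneous_symmLift {p : MvPolynomial (n × Bool) ℝ} {d : ℕ} (hp : p.IsHomogeneous d) :
    (symmLift p).IsHomogeneous d := by
  refine IsHomogeneous.C_mul (IsHomogeneous.sum _ _ _ fun m hm => IsHomogeneous.C_mul ?_ _) _
  rw [← hp (mem_support_iff.mp hm), Pi.one_def, ← Finsupp.degree_eq_weight_one]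
  exact isHomogeneous_monomialLift m

theorem evalR_symmLift (p : MvPolynomial (n × Bool) ℝ) (z : n × n → ℂ) :
    evalR (symmLift p) z = (Fintype.card (Equiv.Perm n) : ℝ)⁻¹ *
      ∑ m ∈ p.support, p.coeff m * evalR (monomialLift m) z := by
  simp [symmLift, evalR]

theorem evalR_symmLift_conj (p : MvPolynomial (n × Bool) ℝ) {g : Matrix n n ℝ} (hg : g * gᵀ = 1)
    (A : Matrix n n ℂ) :
    evalR (symmLift p) (fun q => (g.map ofReal * A * (g.map ofReal)ᵀ) q.1 q.2) =
      evalR (symmLift p) fun q => A q.1 q.2 := by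
  simp only [evalR_symmLift, evalR_monomialLift_conj _ hg]

theorem evalR_symmLift_diagonal (p : MvPolynomial (n × Bool) ℝ) (z : n → ℂ) :
    evalR (symmLift p) (fun q => Matrix.diagonal z q.1 q.2) =
      (Fintype.card (Equiv.Perm n) : ℝ)⁻¹ * ∑ σ : Equiv.Perm n, evalR p (z ∘ σ) := by
  have hmonomials (w : n → ℂ) :
      evalR p w = ∑ m ∈ p.support, p.coeff m * evalR (monomial m 1) w := by
    simp [evalR, eval_eq]
  simp only [evalR_symmLift, evalR_monomialLift_diagonal, hmonomials, Finset.mul_sum]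
  rw [Finset.sum_comm]

theorem evalR_symmLift_diagonal_of_invariant {p : MvPolynomial (n × Bool) ℝ} {z : n → ℂ}
    (hp : ∀ σ : Equiv.Perm n, evalR p (z ∘ σ) = evalR p z) :
    evalR (symmLift p) (fun q => Matrix.diagonal z q.1 q.2) = evalR p z := by
  simp [evalR_symmLift_diagonal, hp]

end Lift

section Quotients

theorem isCompact_SO3 : IsCompact SO3 := by
  refine (isCompact_univ_pi fun _ => isCompact_univ_pi fun _ =>
    isCompact_Icc (a := (-1 : ℝ)) (b := 1)).of_isClosed_subset ?_ fun g hg i _ j _ => ?_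
  · exact .inter (isClosed_eq (by fun_prop) continuous_const)
      (isClosed_eq continuous_id.matrix_det continuous_const)
  · exact abs_le.mp (entry_norm_bound_of_unitary (𝕜 := ℝ)
      (Matrix.mem_unitaryGroup_iff.mpr hg.1) i j)

theorem isClosed_setOf_exists_mem_of_isCompact {K X Z : Type*} [TopologicalSpace K]
    [TopologicalSpace X] [TopologicalSpace Z] {s : Set K} (hs : IsCompact s) {a : K → X → Z}
    (ha : Continuous fun q : K × X => a q.1 q.2) {C : Set Z} (hC : IsClosed C) :
    IsClosed {x | ∃ k ∈ s, a k x ∈ C} := by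
  have := isCompact_iff_compactSpace.mp hs
  have hpreimage : IsClosed {q : s × X | a q.1 q.2 ∈ C} :=
    hC.preimage (ha.comp ((continuous_subtype_val.comp continuous_fst).prodMk continuous_snd))
  convert isClosedMap_snd_of_compactSpace _ hpreimage
  ext x
  simp

theorem isClosedEmbedding_diagonal {n R : Type*} [DecidableEq n] [Zero R] [TopologicalSpace R]
    [T2Space R] : Topology.IsClosedEmbedding (Matrix.diagonal : (n → R) → Matrix n n R) :=
  Function.LeftInverse.isClosedEmbedding Matrix.diag_diagonal
    continuous_id.matrix_diag continuous_id.matrix_diagonal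

theorem isClosed_P : IsClosed P :=
  isClosed_eq (by fun_prop) continuous_const

theorem continuous_act : Continuous fun q : Matrix (Fin 3) (Fin 3) ℝ × Matrix (Fin 3) (Fin 3) ℂ =>
    act q.1 q.2 := by
  have hmap : Continuous fun q : Matrix (Fin 3) (Fin 3) ℝ × Matrix (Fin 3) (Fin 3) ℂ =>
      q.1.map ofReal := continuous_fst.matrix_map continuous_ofReal
  exact (hmap.mul continuous_snd).mul hmap.matrix_transpose

/-- The embedding of `P` into `M` as the diagonal matrices. -/
def diagonalEmbedding (z : P) : Mset :=
  ⟨Matrix.diagonal z, diagonal_mem_Mset z.2⟩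

/-- The map `P/S₃ → M/SO(3)` induced by `diagonalEmbedding`. -/
def orbitMap : Y → M₀ :=
  Quot.map diagonalEmbedding fun z w ⟨σ, hσ⟩ => by
    obtain ⟨g, hg, hact⟩ := exists_act_diagonal_eq_diagonal_comp σ
    exact ⟨g, hg, ((hact z).trans (congrArg _ (funext hσ).symm)).symm⟩

theorem mk_eq_orbitMap_mk_iff {A : Mset} {z : P} :
    Quot.mk relM A = orbitMap (Quot.mk _ z) ↔ ∃ g ∈ SO3, Matrix.diagonal z = act g A := by
  exact ⟨fun h => Quotient.exact (s := ⟨relM, relM_equivalence⟩) h, fun h => Quot.sound h⟩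

theorem orbitMap_injective : Function.Injective orbitMap := by
  rintro ⟨z⟩ ⟨w⟩ h
  obtain ⟨g, hg, hact⟩ := (mk_eq_orbitMap_mk_iff (A := diagonalEmbedding z)).mp h
  exact Quot.sound (exists_perm_of_act_diagonal_eq_diagonal hg hact.symm)

theorem orbitMap_surjective : Function.Surjective orbitMap := by
  rintro ⟨A⟩
  obtain ⟨g, hg, z, hz, hact⟩ := exists_act_eq_diagonal A.2
  exact ⟨Quot.mk _ ⟨z, hz⟩, (mk_eq_orbitMap_mk_iff.mpr ⟨g, hg, hact.symm⟩).symm⟩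

theorem continuous_orbitMap : Continuous orbitMap :=
  continuous_quot_lift _ (continuous_quot_mk.comp
    ((continuous_id.matrix_diagonal.comp continuous_subtype_val).subtype_mk _))

theorem isClosedMap_orbitMap : IsClosedMap orbitMap := by
  intro C hC
  have hslice : IsClosed (Matrix.diagonal '' (Subtype.val '' (Quot.mk relP ⁻¹' C))) :=
    isClosedEmbedding_diagonal.isClosedMap _
      (isClosed_P.isClosedEmbedding_subtypeVal.isClosedMap _ (hC.preimage continuous_quot_mk))
  have hsaturation := (isClosed_setOf_exists_mem_of_isCompact isCompact_SO3 continuous_act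
    hslice).preimage (continuous_subtype_val (p := (· ∈ Mset)))
  refine isQuotientMap_quot_mk.isClosed_preimage.mp ?_
  convert hsaturation
  ext A
  constructor
  · rintro ⟨⟨z⟩, hz, h⟩
    obtain ⟨g, hg, hact⟩ := mk_eq_orbitMap_mk_iff.mp h.symm
    exact ⟨g, hg, z, ⟨z, hz, rfl⟩, hact⟩
  · rintro ⟨g, hg, _, ⟨z, hz, rfl⟩, hact⟩
    exact ⟨Quot.mk _ z, hz, (mk_eq_orbitMap_mk_iff.mpr ⟨g, hg, hact⟩).symm⟩

/-- `orbitMap` as a homeomorphism; it is closed because SO(3) is compact. -/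
def orbitHomeomorph : Y ≃ₜ M₀ :=
  (Equiv.ofBijective orbitMap ⟨orbitMap_injective,
    orbitMap_surjective⟩).toHomeomorphOfContinuousClosed continuous_orbitMap isClosedMap_orbitMap

end Quotients

section RegularFunctions

theorem comp_orbitHomeomorph_mem_RegY {d : ℕ} {f : M₀ → ℝ} (hf : f ∈ RegM d) :
    f ∘ orbitHomeomorph ∈ RegY d := by
  obtain ⟨p, hp, hinv, hfp⟩ := hf
  refine ⟨diagRestrict p, isHomogeneous_diagRestrict hp, fun σ z hz => ?_, fun z => ?_⟩
  · obtain ⟨g, hg, hact⟩ := exists_act_diagonal_eq_diagonal_comp σ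
    have hgz := hinv g hg _ (diagonal_mem_Vset_iff.mpr hz)
    rw [hact] at hgz
    rwa [evalR_diagRestrict, evalR_diagRestrict]
  · rw [evalR_diagRestrict]
    exact hfp (diagonalEmbedding z)

theorem comp_orbitHomeomorph_symm_mem_RegM {d : ℕ} {f : Y → ℝ} (hf : f ∈ RegY d) :
    f ∘ orbitHomeomorph.symm ∈ RegM d := by
  obtain ⟨p, hp, hinv, hfp⟩ := hf
  refine ⟨symmLift p, isHomogeneous_symmLift hp,
    fun g hg A _ => evalR_symmLift_conj p hg.1 A, fun A => ?_⟩
  obtain ⟨g, hg, z, hz, hact⟩ := exists_act_eq_diagonal A.2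
  have hpreimage : orbitHomeomorph.symm (Quot.mk _ A) = Quot.mk _ ⟨z, hz⟩ :=
    orbitHomeomorph.symm_apply_eq.mpr (mk_eq_orbitMap_mk_iff.mpr ⟨g, hg, hact.symm⟩)
  calc f (orbitHomeomorph.symm (Quot.mk _ A)) = evalR p z :=
        (congrArg f hpreimage).trans (hfp ⟨z, hz⟩)
    _ = evalR (symmLift p) fun q => Matrix.diagonal z q.1 q.2 :=
        (evalR_symmLift_diagonal_of_invariant fun σ => hinv σ z hz).symm
    _ = evalR (symmLift p) fun q => (A : Matrix (Fin 3) (Fin 3) ℂ) q.1 q.2 := by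
        rw [← hact]
        exact evalR_symmLift_conj p hg.1 A

end RegularFunctions

/-- The symplectic quotient of the SO(3)-module of traceless symmetric matrices (the
SU(2)-module R₄) admits a ℤ-graded regular diffeomorphism to the linear symplectic orbifold
`ℂ²/S₃` realized as `P/S₃`. -/
theorem graded_regular_diffeomorphism_R4_to_C2_mod_S3 :
    ∃ χ : M₀ ≃ₜ Y, ∀ d : ℕ, (fun f : Y → ℝ => f ∘ ⇑χ) '' RegY d = RegM d := by
  refine ⟨orbitHomeomorph.symm, fun d => Set.Subset.antisymm ?_ fun f hf => ?_⟩
  · rintro _ ⟨f, hf, rfl⟩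
    exact comp_orbitHomeomorph_symm_mem_RegM hf
  · refine ⟨f ∘ orbitHomeomorph, comp_orbitHomeomorph_mem_RegY hf, ?_⟩
    ext x
    simp

end

end Stmt11
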